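/- For every α ∈ F_q((t)) with v_t(α) > 0, there exists a natural number N > 0 (depending on α) such that for all m, n > 0: (∃ k ∈ ℕ, m = n·p^k) if and only if m ≥ n and there exists a ∈ F_q((t)) with α^{-mN} - α^{-nN} = a^p - a. -/

import Mathlib

open HahnSeries in
/-- Euler operator `t d/dt`. -/
noncomputable def eulerOp {F : Type*} [Field F] (f : LaurentSeries F) : LaurentSeries F where
  coeff n := (n : F) * f.coeff n
  isPWO_support' := f.isPWO_support.mono (by
    intro n hn
    simp only [Function.mem_support, ne_eq, mul_eq_zero, not_or] at hn
    exact hn.2)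

section helpers
variable {F : Type*} [Field F]

theorem eulerOp_coeff (f : LaurentSeries F) (n : ℤ) : (eulerOp f).coeff n = (n : F) * f.coeff n := rfl

theorem eulerOp_support (f : LaurentSeries F) : (eulerOp f).support ⊆ f.support := by
  intro n hn
  simp only [HahnSeries.mem_support, eulerOp_coeff, ne_eq, mul_eq_zero, not_or] at hn
  exact hn.2

theorem eulerOp_sub (f g : LaurentSeries F) : eulerOp (f - g) = eulerOp f - eulerOp g := by
  ext n
  simp [eulerOp_coeff, mul_sub]

theorem eulerOp_mul (f g : LaurentSeries F) : eulerOp (f * g) = eulerOp f * g + f * eulerOp g := by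
  ext n
  rw [HahnSeries.coeff_add, eulerOp_coeff, HahnSeries.coeff_mul,
    HahnSeries.coeff_mul_left' f.isPWO_support (eulerOp_support f),
    HahnSeries.coeff_mul_right' g.isPWO_support (eulerOp_support g),
    Finset.mul_sum, ← Finset.sum_add_distrib]
  refine Finset.sum_congr rfl fun ij hij => ?_
  have h : ij.1 + ij.2 = n := by
    simp at hij
    tauto
  rw [eulerOp_coeff, eulerOp_coeff, ← h]
  push_cast
  ring

theorem eulerOp_pow (f : LaurentSeries F) (n : ℕ) :
    eulerOp (f ^ (n + 1)) = ((n + 1 : ℕ) : LaurentSeries F) * f ^ n * eulerOp f := by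
  induction n with
  | zero => simp
  | succ n ih =>
    rw [pow_succ, eulerOp_mul, ih]
    push_cast
    ring

theorem eulerOp_order (f : LaurentSeries F) (h : eulerOp f ≠ 0) : f.order ≤ (eulerOp f).order := by
  apply HahnSeries.order_le_of_coeff_ne_zero
  have := HahnSeries.coeff_order_eq_zero.not.2 h
  rw [eulerOp_coeff] at this
  exact right_ne_zero_of_mul this

theorem order_sub_of_lt (x y : LaurentSeries F) (hx : x ≠ 0) (h : x.order < y.order) :
    x - y ≠ 0 ∧ (x - y).order = x.order := by
  have h1 : (x - y).coeff x.order ≠ 0 := by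
    rw [HahnSeries.coeff_sub, HahnSeries.coeff_eq_zero_of_lt_order h, sub_zero]
    exact HahnSeries.coeff_order_eq_zero.not.2 hx
  have h0 : x - y ≠ 0 := by
    intro h; rw [h] at h1; simp at h1
  refine ⟨h0, le_antisymm (HahnSeries.order_le_of_coeff_ne_zero h1) ?_⟩
  have := HahnSeries.min_order_le_order_add (x := x) (y := -y) (by rwa [← sub_eq_add_neg])
  rw [HahnSeries.order_neg, min_eq_left h.le, ← sub_eq_add_neg] at this
  exact this

variable (p : ℕ) [hp : Fact p.Prime] [CharP F p]

theorem laurent_charP : CharP (LaurentSeries F) p :=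
  charP_of_injective_ringHom (HahnSeries.C_injective (Γ := ℤ) (R := F)) p

theorem exists_root [Fintype F] (g : LaurentSeries F) (h : eulerOp g = 0) :
    ∃ γ : LaurentSeries F, g = γ ^ p := by
  by_cases hg : g = 0
  · exact ⟨0, by rw [hg, zero_pow hp.out.ne_zero]⟩
  have key : ∀ n : ℤ, g.coeff n ≠ 0 → (p : ℤ) ∣ n := by
    intro n hn
    have h1 : (eulerOp g).coeff n = 0 := by rw [h]; rfl
    rw [eulerOp_coeff] at h1
    exact (CharP.intCast_eq_zero_iff F p n).1 ((mul_eq_zero.1 h1).resolve_right hn)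
  obtain ⟨e, he⟩ := key _ (HahnSeries.coeff_order_eq_zero.not.2 hg)
  have hsurj : Function.Surjective (frobenius F p) :=
    Finite.surjective_of_injective (frobenius_inj F p)
  choose φ hφ using hsurj
  let w : PowerSeries F := PowerSeries.mk fun n => φ (g.coeff (g.order + (p * n : ℕ)))
  have hw : g.powerSeriesPart = w ^ p := by
    have := MvPowerSeries.map_frobenius_expand p hp.out.ne_zero (f := w)
    change PowerSeries.map (frobenius F p) (PowerSeries.expand p hp.out.ne_zero w) = w ^ p at this
    rw [← this]
    ext n
    rw [LaurentSeries.powerSeriesPart_coeff, PowerSeries.coeff_map]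
    by_cases hn : p ∣ n
    · obtain ⟨k, rfl⟩ := hn
      rw [PowerSeries.coeff_expand_mul, PowerSeries.coeff_mk, hφ]
    · rw [PowerSeries.coeff_expand_of_not_dvd _ _ _ hn, map_zero]
      by_contra hc
      have := key _ hc
      rw [he, Int.dvd_add_right (dvd_mul_right _ _)] at this
      exact hn (by exact_mod_cast this)
  refine ⟨HahnSeries.single e 1 * HahnSeries.ofPowerSeries ℤ F w, ?_⟩
  rw [mul_pow, ← map_pow (HahnSeries.ofPowerSeries ℤ F), ← hw, HahnSeries.single_pow]
  conv_lhs => rw [← LaurentSeries.single_order_mul_powerSeriesPart g]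
  rw [he]
  simp

theorem exists_decomp [Fintype F] (M : ℕ) : ∀ (g : LaurentSeries F), g.order ≠ 0 →
    g.order.natAbs ≤ M → ∃ (γ : LaurentSeries F) (s : ℕ), g = γ ^ (p ^ s) ∧ eulerOp γ ≠ 0 := by
  induction M with
  | zero => intro g h1 h2; omega
  | succ M ih =>
    intro g h1 h2
    by_cases h : eulerOp g = 0
    · obtain ⟨δ, rfl⟩ := exists_root p g h
      rw [HahnSeries.order_pow, nsmul_eq_mul] at h1 h2
      have h3 := right_ne_zero_of_mul h1
      have h4 : δ.order.natAbs ≤ M := by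
        rw [Int.natAbs_mul, Int.natAbs_natCast] at h2
        have := hp.out.two_le
        have : 0 < δ.order.natAbs := by omega
        nlinarith
      obtain ⟨γ, s, rfl, h5⟩ := ih δ h3 h4
      exact ⟨γ, s + 1, by rw [← pow_mul, pow_succ], h5⟩
    · exact ⟨g, 0, by simp, h⟩

theorem core (g : LaurentSeries F) (d : ℤ) (hd : g.order = -d) (hd0 : 0 < d)
    (hg : eulerOp g ≠ 0) (N : ℕ) (hN : ¬ p ∣ N) (hN2 : (p : ℤ) * (d + (eulerOp g).order) < N)
    (m n : ℕ) (hm : ¬ p ∣ m) (hn : ¬ p ∣ n) (hnm : n < m) (a : LaurentSeries F)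
    (h : g ^ (m * N) - g ^ (n * N) = a ^ p - a) : False := by
  have := laurent_charP (F := F) p
  have hp2 : (2 : ℤ) ≤ p := by exact_mod_cast hp.out.two_le
  have hg0 : g ≠ 0 := by rintro rfl; simp at hd; omega
  have hNpos : 0 < N := Nat.pos_of_ne_zero (by rintro rfl; simp at hN)
  have hnpos : 0 < n := Nat.pos_of_ne_zero (by rintro rfl; simp at hn)
  have hlt : n * N < m * N := Nat.mul_lt_mul_of_pos_right hnm hNpos
  have hnN : ¬ p ∣ n * N := by rw [hp.out.dvd_mul]; tauto
  have hmN : ¬ p ∣ m * N := by rw [hp.out.dvd_mul]; tauto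
  have hbig : N ≤ m * N := Nat.le_mul_of_pos_left _ (by omega)
  obtain ⟨A, hA⟩ : ∃ A, m * N = A + 1 := ⟨m * N - 1, by omega⟩
  obtain ⟨B, hB⟩ : ∃ B, n * N = B + 1 := ⟨n * N - 1, by have := Nat.mul_pos hnpos hNpos; omega⟩
  rw [hA, hB] at h hlt
  rw [hA] at hmN hbig
  rw [hB] at hnN
  have hcast : ∀ k : ℕ, ¬ p ∣ k → (k : LaurentSeries F) ≠ 0 ∧ (k : LaurentSeries F).order = 0 := by
    intro k hk
    have h1 : (k : F) ≠ 0 := fun h => hk ((CharP.cast_eq_zero_iff F p k).1 h)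
    have h2 : (k : LaurentSeries F) = HahnSeries.C (k : F) := by simp
    rw [h2]
    exact ⟨HahnSeries.C_ne_zero h1, HahnSeries.order_C⟩
  have ord : ∀ k : ℕ, ¬ p ∣ k + 1 → eulerOp (g ^ (k+1)) ≠ 0 ∧
      (eulerOp (g ^ (k+1))).order = -(k * d) + (eulerOp g).order := by
    intro k hk
    obtain ⟨h1, h2⟩ := hcast _ hk
    have h3 := pow_ne_zero k hg0
    rw [eulerOp_pow]
    refine ⟨mul_ne_zero (mul_ne_zero h1 h3) hg, ?_⟩
    rw [HahnSeries.order_mul (mul_ne_zero h1 h3) hg, HahnSeries.order_mul h1 h3, h2,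
      HahnSeries.order_pow, hd]
    simp
  obtain ⟨x1, x2⟩ := ord A hmN
  obtain ⟨y1, y2⟩ := ord B hnN
  have hABd : (B : ℤ) * d < A * d := by
    apply mul_lt_mul_of_pos_right _ hd0
    omega
  obtain ⟨z1, z2⟩ := order_sub_of_lt _ (eulerOp (g ^ (B+1))) x1 (by rw [x2, y2]; omega)
  rw [← eulerOp_sub, h] at z1 z2
  have hap : eulerOp (a ^ p) = 0 := by
    obtain ⟨k, hk⟩ : ∃ k, p = k + 1 := ⟨p - 1, by have := hp.out.two_le; omega⟩
    have : ((k + 1 : ℕ) : LaurentSeries F) = 0 := by rw [← hk]; exact CharP.cast_eq_zero _ p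
    rw [hk, eulerOp_pow, this]; simp
  rw [eulerOp_sub, hap, zero_sub] at z1 z2
  rw [HahnSeries.order_neg, x2] at z2
  have z3 := eulerOp_order a (by simpa using z1)
  have ha0 : a ≠ 0 := by
    rintro rfl
    apply z1
    ext n
    simp [eulerOp_coeff]
  obtain ⟨_, w2⟩ := order_sub_of_lt (g ^ (A+1)) (g ^ (B+1)) (pow_ne_zero _ hg0) (by
    rw [HahnSeries.order_pow, HahnSeries.order_pow, hd]
    simp only [nsmul_eq_mul]; push_cast; linarith)
  rw [h, HahnSeries.order_pow, hd, nsmul_eq_mul] at w2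
  push_cast at w2
  have hAd : (A + 1 : ℤ) ≤ (A + 1) * d := by nlinarith
  have hbig' : (N : ℤ) ≤ A + 1 := by exact_mod_cast hbig
  have fin : -((A + 1 : ℤ) * d) ≤ p * a.order := by
    by_cases ho : a.order < 0
    · obtain ⟨_, v2⟩ := order_sub_of_lt (a ^ p) a (pow_ne_zero _ ha0) (by
        rw [HahnSeries.order_pow, nsmul_eq_mul]; nlinarith)
      rw [HahnSeries.order_pow, nsmul_eq_mul, w2] at v2
      linarith
    · push Not at ho
      have : 0 ≤ (p : ℤ) * a.order := by positivity
      have : (0:ℤ) ≤ (A + 1 : ℤ) * d := by positivity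
      linarith
  rw [z2] at z3
  have e1 : (p : ℤ) * a.order ≤ p * (-(A * d) + (eulerOp g).order) :=
    mul_le_mul_of_nonneg_left z3 (by omega)
  nlinarith

end helpers

section AS
variable {K : Type*} [Field K] (p : ℕ) [hp : Fact p.Prime] [CharP K p]

theorem as_pow (x : K) (k : ℕ) : ∃ a : K, x ^ (p ^ k) - x = a ^ p - a := by
  induction k with
  | zero => exact ⟨0, by simp [hp.out.ne_zero]⟩
  | succ k ih =>
    obtain ⟨a, ha⟩ := ih
    refine ⟨a + x ^ (p ^ k), ?_⟩
    rw [add_pow_char, ← pow_mul, ← pow_succ]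
    linear_combination ha

theorem as_reduce (g : K) (N m n i j : ℕ) (h : ∃ a : K, g ^ (p ^ i * m * N) - g ^ (p ^ j * n * N) = a ^ p - a) :
    ∃ a : K, g ^ (m * N) - g ^ (n * N) = a ^ p - a := by
  obtain ⟨a, ha⟩ := h
  obtain ⟨b, hb⟩ := as_pow p (g ^ (m * N)) i
  obtain ⟨c, hc⟩ := as_pow p (g ^ (n * N)) j
  refine ⟨a - b + c, ?_⟩
  rw [add_pow_char, sub_pow_char]
  rw [← pow_mul] at hb hc
  rw [show p ^ i * m * N = m * N * p ^ i by ring, show p ^ j * n * N = n * N * p ^ j by ring] at ha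
  linear_combination ha - hb + hc

end AS

/-- For every `α` with `v_t(α) > 0` there is `N > 0` such that for all
`m, n > 0`, `n |_p m` iff `m ≥ n` and `α^{-mN} - α^{-nN} = a^p - a` has a solution. -/
theorem stmt_11 (p : ℕ) [Fact p.Prime] (r : ℕ) (hr : 0 < r)
    (F : Type*) [Field F] [Fintype F] [CharP F p] (hq : Fintype.card F = p ^ r)
    (α : LaurentSeries F) (hα : 0 < α.order) :
    ∃ N : ℕ, 0 < N ∧ ∀ m n : ℕ, 0 < m → 0 < n →
      ((∃ k : ℕ, m = n * p ^ k) ↔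
        (n ≤ m ∧ ∃ a : LaurentSeries F,
          α ^ (-((m * N : ℕ) : ℤ)) - α ^ (-((n * N : ℕ) : ℤ)) = a ^ p - a)) := by
  have hp : p.Prime := Fact.out
  have := laurent_charP (F := F) p
  have hα0 : α ≠ 0 := by rintro rfl; simp at hα
  have hinv : (α⁻¹).order = -α.order := by
    have h1 : (α * α⁻¹).order = 0 := by rw [mul_inv_cancel₀ hα0, HahnSeries.order_one]
    rw [HahnSeries.order_mul hα0 (inv_ne_zero hα0)] at h1
    omega
  have hz : ∀ k : ℕ, α ^ (-(k : ℤ)) = α⁻¹ ^ k := by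
    intro k; rw [zpow_neg, zpow_natCast, inv_pow]
  obtain ⟨g, s, hgs, hg⟩ := exists_decomp p _ (α⁻¹) (by omega) le_rfl
  have hgd : g.order < 0 := by
    rw [hgs, HahnSeries.order_pow, nsmul_eq_mul] at hinv
    by_contra hc
    push Not at hc
    have : 0 ≤ ((p ^ s : ℕ) : ℤ) * g.order := by positivity
    omega
  set E : ℤ := -g.order + (eulerOp g).order with hE
  refine ⟨p * E.natAbs + 1, by omega, ?_⟩
  set N := p * E.natAbs + 1 with hNdef
  have hN : ¬ p ∣ N := by
    rw [hNdef, Nat.dvd_add_right (dvd_mul_right _ _)]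
    exact hp.not_dvd_one
  have hN2 : (p : ℤ) * E < N := by
    have : E ≤ E.natAbs := Int.le_natAbs
    have : (p : ℤ) * E ≤ p * E.natAbs := mul_le_mul_of_nonneg_left this (by positivity)
    rw [hNdef]; push_cast at this ⊢; linarith
  intro m n hm hn
  simp only [hz]
  constructor
  · rintro ⟨k, rfl⟩
    refine ⟨Nat.le_mul_of_pos_right _ (pow_pos hp.pos _), ?_⟩
    obtain ⟨a, ha⟩ := as_pow p (α⁻¹ ^ (n * N)) k
    exact ⟨a, by rw [← ha, ← pow_mul]; congr 2; ring⟩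
  · rintro ⟨hnm, a, ha⟩
    obtain ⟨i, m', hm', rfl⟩ := Nat.exists_eq_pow_mul_and_not_dvd hm.ne' p hp.ne_one
    obtain ⟨j, n', hn', rfl⟩ := Nat.exists_eq_pow_mul_and_not_dvd hn.ne' p hp.ne_one
    rw [hgs, ← pow_mul, ← pow_mul, ← mul_assoc, ← mul_assoc, ← mul_assoc, ← mul_assoc,
      ← pow_add, ← pow_add] at ha
    obtain ⟨b, hb⟩ := as_reduce p g N m' n' _ _ ⟨a, ha⟩
    rcases lt_trichotomy n' m' with hlt | rfl | hlt
    · exact (core p g (-g.order) (by ring) (by omega) hg N hN hN2 m' n' hm' hn' hlt b hb).elim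
    · have hpos : 0 < n' := Nat.pos_of_ne_zero (by rintro rfl; simp at hn')
      have hij : j ≤ i := (Nat.pow_le_pow_iff_right hp.one_lt).1 (Nat.le_of_mul_le_mul_right hnm hpos)
      obtain ⟨k, rfl⟩ := Nat.exists_eq_add_of_le hij
      exact ⟨k, by rw [pow_add]; ring⟩
    · refine (core p g (-g.order) (by ring) (by omega) hg N hN hN2 n' m' hn' hm' hlt (-b) ?_).elim
      have : (-b) ^ p = - b ^ p := by
        have := sub_pow_char (p := p) (0 : LaurentSeries F) b
        rwa [zero_sub, zero_pow hp.ne_zero, zero_sub] at this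
      rw [this]
      linear_combination -hb
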